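/- Let p ≥ 5 be an odd prime. For every (a,b) ∈ ZMod p × ZMod p, every orbit of size at least 2 of the permutation π⁻¹ ∘ π_{(a,b)} of ZMod p × ZMod p contains at least one element of 𝓘⁽²⁾ and at least one element of 𝓘⁽¹⁾. -/

import Mathlib

/-- The map `π_{(a,b)}` on `ZMod p × ZMod p` (with `x` a fixed primitive root mod `p`). -/
def piab {p : ℕ} (x a b : ZMod p) : ZMod p × ZMod p → ZMod p × ZMod p :=
  fun cd =>
    if cd.1 = 0 then
      if a + b + cd.2 ≠ 0 then (a, a + b + cd.2) else (a + x * b, 0)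
    else
      if b + cd.2 = 0 then (a + cd.1 + x * b, 0) else (a + cd.1, b + cd.2)

/-- The composite `π⁻¹ ∘ π_{(a,b)}`, where `π(c,d) = (x⁻¹·c, x·d)`,
so `π⁻¹(c,d) = (x·c, x⁻¹·d)`. -/
def piInvPiab {p : ℕ} (x a b : ZMod p) : ZMod p × ZMod p → ZMod p × ZMod p :=
  fun cd => (x * (piab x a b cd).1, x⁻¹ * (piab x a b cd).2)

/-- The orbit of `u` under `f`: the set `{fᵏ(u) : k ∈ ℕ}`. -/
def orbit {α : Type*} (f : α → α) (u : α) : Set α :=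
  {v | ∃ k : ℕ, f^[k] u = v}

/-- The set `𝓘⁽²⁾ = {(0,1), (1,0)} ∪ {(z,z) : z ≠ 0} ∪ {(z, z·x) : z ≠ 0}`. -/
def I2 (p : ℕ) (x : ZMod p) : Set (ZMod p × ZMod p) :=
  {q | q = (0, 1) ∨ q = (1, 0) ∨ (q.1 ≠ 0 ∧ q.2 = q.1) ∨ (q.1 ≠ 0 ∧ q.2 = q.1 * x)}

theorem aux_gen {p : ℕ} [Fact p.Prime] {x a b : ZMod p} (c d : ZMod p)
    (h1 : a = 0 ∨ c ≠ 0) (h2 : b = 0 ∨ b + d ≠ 0) :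
    piInvPiab x a b (c, d) = (x * (a + c), x⁻¹ * (b + d)) := by
  unfold piInvPiab piab
  by_cases hc : c = 0 <;> by_cases hd : b + d = 0 <;> simp_all

theorem aux_c {p : ℕ} [Fact p.Prime] {x a b : ZMod p} (d : ZMod p) (h : b = 0 ∨ a + b + d ≠ 0) :
    piInvPiab x a b (0, d) = (x * a, x⁻¹ * (a + b + d)) := by
  unfold piInvPiab piab
  by_cases hd : a + b + d = 0 <;> simp_all

theorem aux_cd {p : ℕ} [Fact p.Prime] {x a b : ZMod p} (d : ZMod p) (h : a + b + d = 0) :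
    piInvPiab x a b (0, d) = (x * (a + x * b), 0) := by
  unfold piInvPiab piab
  simp_all

theorem aux_d {p : ℕ} [Fact p.Prime] {x a b : ZMod p} (c d : ZMod p) (h1 : a = 0 ∨ c ≠ 0)
    (h : b + d = 0) :
    piInvPiab x a b (c, d) = (x * (a + c + x * b), 0) := by
  unfold piInvPiab piab
  by_cases hc : c = 0 <;> simp_all

/-- `w` is reachable from `v`. -/
def Reach {α : Type*} (f : α → α) (v w : α) : Prop := ∃ k : ℕ, f^[k] v = w

theorem Reach.rfl' {α : Type*} {f : α → α} {v : α} : Reach f v v := ⟨0, rfl⟩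

theorem Reach.step {α : Type*} {f : α → α} {v : α} : Reach f v (f v) := ⟨1, rfl⟩

theorem Reach.trans {α : Type*} {f : α → α} {u v w : α} (h : Reach f u v) (h' : Reach f v w) :
    Reach f u w := by
  obtain ⟨k, rfl⟩ := h
  obtain ⟨l, rfl⟩ := h'
  exact ⟨l + k, Function.iterate_add_apply f l k u⟩

theorem aux_run {p : ℕ} [Fact p.Prime] {x a b c0 d0 : ZMod p} (hx0 : x ≠ 0)
    (hc0 : x * (a + c0) = c0) (hd0 : b + d0 = x * d0) (t e : ZMod p) (j : ℕ)
    (h : ∀ i < j, (a = 0 ∨ c0 + x ^ i * t ≠ 0) ∧ (b = 0 ∨ b + (d0 + x⁻¹ ^ i * e) ≠ 0)) :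
    (piInvPiab x a b)^[j] (c0 + t, d0 + e) = (c0 + x ^ j * t, d0 + x⁻¹ ^ j * e) := by
  induction j with
  | zero => simp
  | succ j ih =>
    rw [Function.iterate_succ_apply', ih (fun i hi => h i (by omega)),
      aux_gen _ _ (h j (by omega)).1 (h j (by omega)).2]
    have h3 : x⁻¹ * (b + d0) = d0 := by rw [hd0]; field_simp
    ext
    · simp only [pow_succ]; linear_combination hc0
    · simp only [pow_succ]; linear_combination h3

/-- `x` generates the multiplicative group. -/
def Gen {p : ℕ} (x : ZMod p) : Prop := ∀ z : ZMod p, z ≠ 0 → ∃ k : ℕ, x ^ k = z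

theorem aux_x0 {p : ℕ} [Fact p.Prime] (hp5 : 5 ≤ p) {x : ZMod p} (hx : Gen x) : x ≠ 0 := by
  rintro rfl
  have h1 : (-1 : ZMod p) ≠ 0 := by simp
  obtain ⟨k, hk⟩ := hx _ h1
  have : Fact (2 < p) := ⟨by omega⟩
  rcases Nat.eq_zero_or_pos k with rfl | h
  · exact ZMod.neg_one_ne_one (by simpa using hk.symm)
  · rw [zero_pow (by omega)] at hk; exact h1 hk.symm

theorem aux_ord {p : ℕ} [Fact p.Prime] {x : ZMod p} (hx : Gen x) (n : ℕ) (hn : 0 < n)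
    (h : x ^ n = 1) : p ≤ n + 1 := by
  classical
  have hsub : (Finset.univ : Finset (ZMod p)) ⊆
      insert 0 ((Finset.range n).image (fun i => x ^ i)) := by
    intro z _
    by_cases hz : z = 0
    · simp [hz]
    obtain ⟨k, rfl⟩ := hx z hz
    refine Finset.mem_insert_of_mem (Finset.mem_image.2 ⟨k % n, by simp [Nat.mod_lt _ hn], ?_⟩)
    conv_rhs => rw [← Nat.div_add_mod k n, pow_add, pow_mul, h, one_pow, one_mul]
  have := Finset.card_le_card hsub
  rw [Finset.card_univ, ZMod.card] at this
  have h2 := Finset.card_insert_le (0 : ZMod p) ((Finset.range n).image (fun i => x ^ i))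
  have h3 := Finset.card_image_le (s := Finset.range n) (f := fun i => x ^ i)
  simp at h3
  omega

theorem aux_inv {p : ℕ} [Fact p.Prime] {x : ZMod p} (hx : Gen x) : Gen x⁻¹ := by
  intro z hz
  obtain ⟨k, hk⟩ := hx z⁻¹ (inv_ne_zero hz)
  exact ⟨k, by rw [inv_pow, hk, inv_inv]⟩

theorem aux_nsq {p : ℕ} [Fact p.Prime] (hp5 : 5 ≤ p) {x : ZMod p} (hx : Gen x) (r : ZMod p) :
    x ≠ r ^ 2 := by
  intro h
  obtain ⟨z, hz⟩ := FiniteField.exists_nonsquare (F := ZMod p) (by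
    rw [ZMod.ringChar_zmod_n]; omega)
  have hz0 : z ≠ 0 := by rintro rfl; exact hz (IsSquare.zero)
  obtain ⟨k, rfl⟩ := hx z hz0
  exact hz ⟨r ^ k, by rw [h]; ring⟩

theorem aux_least {p : ℕ} [Fact p.Prime] {x : ZMod p} (hx : Gen x) (z : ZMod p) (hz : z ≠ 0) :
    ∃ k, x ^ k = z ∧ (∀ i < k, x ^ i ≠ z) ∧ ∀ i, 0 < i → i ≤ k → x ^ i ≠ 1 := by
  classical
  refine ⟨Nat.find (hx z hz), Nat.find_spec (hx z hz), fun i hi => Nat.find_min _ hi, ?_⟩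
  intro i h0 hi h1
  have h2 := Nat.find_spec (hx z hz)
  rw [← Nat.sub_add_cancel hi, pow_add, h1, mul_one] at h2
  exact Nat.find_min (hx z hz) (m := Nat.find (hx z hz) - i) (by omega) h2

theorem aux_avoid {p : ℕ} [Fact p.Prime] (hp5 : 5 ≤ p) (z1 z2 z3 z4 : ZMod p) :
    ∃ z, z ≠ z1 ∧ z ≠ z2 ∧ z ≠ z3 ∧ z ≠ z4 := by
  classical
  by_contra hcon
  have hsub : (Finset.univ : Finset (ZMod p)) ⊆ {z1, z2, z3, z4} := by
    intro z _
    by_contra h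
    simp only [Finset.mem_insert, Finset.mem_singleton, not_or] at h
    exact hcon ⟨z, h⟩
  have := Finset.card_le_card hsub
  rw [Finset.card_univ, ZMod.card] at this
  have := Finset.card_le_four (a := z1) (b := z2) (c := z3) (d := z4)
  omega

/-- The desired conclusion for the orbit of `v`. -/
def Good {p : ℕ} (x a b : ZMod p) (v : ZMod p × ZMod p) : Prop :=
  (∃ q, Reach (piInvPiab x a b) v q ∧ q ∈ I2 p x) ∧ (∃ q, Reach (piInvPiab x a b) v q ∧ q ∉ I2 p x)

theorem Good.of_reach {p : ℕ} {x a b : ZMod p} {v w : ZMod p × ZMod p}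
    (h : Reach (piInvPiab x a b) v w) (hw : Good x a b w) : Good x a b v := by
  obtain ⟨⟨q, h1, h2⟩, ⟨r, h3, h4⟩⟩ := hw
  exact ⟨⟨q, h.trans h1, h2⟩, ⟨r, h.trans h3, h4⟩⟩

section
variable {p : ℕ} [Fact p.Prime] {x a b c0 d0 : ZMod p}

/-- A horizontal axis is good. -/
theorem good_h (hp5 : 5 ≤ p) (hx : Gen x) (hx1 : x ≠ 1) (hd : d0 ≠ 0) (v : ZMod p × ZMod p)
    (h : ∀ c, c ≠ c0 → Reach (piInvPiab x a b) v (c, d0)) : Good x a b v := by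
  have hx0 := aux_x0 hp5 hx
  constructor
  · by_cases hc : d0 = c0
    · refine ⟨(x⁻¹ * d0, d0), h _ ?_, Or.inr (Or.inr (Or.inr ⟨?_, ?_⟩))⟩
      · rw [← hc]; intro h2
        apply hx1; field_simp at h2; exact h2.symm
      · simp [hx0, hd]
      · simp only; field_simp
    · exact ⟨(d0, d0), h _ hc, Or.inr (Or.inr (Or.inl ⟨hd, rfl⟩))⟩
  · obtain ⟨z, h1, h2, h3, h4⟩ := aux_avoid hp5 c0 0 d0 (x⁻¹ * d0)
    refine ⟨(z, d0), h _ h1, ?_⟩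
    rintro (h | h | h | h)
    · simp [h2] at h
    · simp [hd] at h
    · exact h3 h.2.symm
    · apply h4; have := h.2; simp only at this; rw [this]; field_simp

/-- A vertical axis is good. -/
theorem good_v (hp5 : 5 ≤ p) (hx : Gen x) (hx1 : x ≠ 1) (hc : c0 ≠ 0) (v : ZMod p × ZMod p)
    (h : ∀ d, d ≠ d0 → Reach (piInvPiab x a b) v (c0, d)) : Good x a b v := by
  have hx0 := aux_x0 hp5 hx
  constructor
  · by_cases hd : c0 = d0
    · refine ⟨(c0, c0 * x), h _ ?_, Or.inr (Or.inr (Or.inr ⟨hc, rfl⟩))⟩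
      rw [← hd]; intro h2
      apply hx1; field_simp at h2; exact h2
    · exact ⟨(c0, c0), h _ hd, Or.inr (Or.inr (Or.inl ⟨hc, rfl⟩))⟩
  · obtain ⟨z, h1, h2, h3, h4⟩ := aux_avoid hp5 d0 0 c0 (c0 * x)
    refine ⟨(c0, z), h _ h1, ?_⟩
    rintro (h | h | h | h)
    · simp [hc] at h
    · simp [h2] at h
    · exact h3 h.2
    · exact h4 h.2

theorem aux_run' (hx0 : x ≠ 0)
    (hc0 : x * (a + c0) = c0) (hd0 : b + d0 = x * d0) (c d : ZMod p) (j : ℕ)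
    (h : ∀ i < j, (a = 0 ∨ c0 + x ^ i * (c - c0) ≠ 0) ∧
      (b = 0 ∨ b + (d0 + x⁻¹ ^ i * (d - d0)) ≠ 0)) :
    Reach (piInvPiab x a b) (c, d) (c0 + x ^ j * (c - c0), d0 + x⁻¹ ^ j * (d - d0)) := by
  have := aux_run hx0 hc0 hd0 (c - c0) (d - d0) j h
  exact ⟨j, by simpa using this⟩

/-- Case `a = b = 0`. -/
theorem case00 (hp5 : 5 ≤ p) (hx : Gen x) (hx1 : x ≠ 1) (v : ZMod p × ZMod p)
    (hv : v ≠ (0, 0)) : Good x 0 0 v := by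
  have hx0 := aux_x0 hp5 hx
  obtain ⟨c, d⟩ := v
  have run : ∀ j, Reach (piInvPiab x 0 0) (c, d) (x ^ j * c, x⁻¹ ^ j * d) := by
    intro j
    have := aux_run' (a := 0) (b := 0) (c0 := 0) (d0 := 0) hx0 (by simp) (by simp) c d j (by simp)
    simpa using this
  have : Fact (2 < p) := ⟨by omega⟩
  have hm1 : (-1 : ZMod p) ≠ 1 := ZMod.neg_one_ne_one
  by_cases hc : c = 0
  · subst hc
    have hd : d ≠ 0 := by rintro rfl; exact hv rfl
    have r : ∀ z, z ≠ 0 → Reach (piInvPiab x 0 0) (0, d) (0, z) := by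
      intro z hz
      obtain ⟨k, hk⟩ := aux_inv hx (z / d) (div_ne_zero hz hd)
      have := run k
      rw [hk] at this
      simpa [hd] using this
    refine ⟨⟨(0, 1), r _ one_ne_zero, Or.inl rfl⟩, ⟨(0, -1), r _ (by simp), ?_⟩⟩
    simp [I2, hm1]
  by_cases hd : d = 0
  · subst hd
    have r : ∀ z, z ≠ 0 → Reach (piInvPiab x 0 0) (c, 0) (z, 0) := by
      intro z hz
      obtain ⟨k, hk⟩ := hx (z / c) (div_ne_zero hz hc)
      have := run k
      rw [hk] at this
      simpa [hc] using this
    refine ⟨⟨(1, 0), r _ one_ne_zero, Or.inr (Or.inl rfl)⟩, ⟨(-1, 0), r _ (by simp), ?_⟩⟩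
    simp [I2, hm1, hx0]
  constructor
  · obtain ⟨m, hm⟩ := hx (d / c) (div_ne_zero hd hc)
    have hm' : d = x ^ m * c := by rw [hm]; field_simp
    rcases Nat.even_or_odd' m with ⟨k, rfl | rfl⟩
    · refine ⟨_, run k, Or.inr (Or.inr (Or.inl ⟨by simp [hc, hx0], ?_⟩))⟩
      simp only [hm', inv_pow]; field_simp; ring
    · refine ⟨_, run k, Or.inr (Or.inr (Or.inr ⟨by simp [hc, hx0], ?_⟩))⟩
      simp only [hm', inv_pow]; field_simp; ring
  · by_cases h0 : (c, d) ∈ I2 p x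
    · refine ⟨_, run 1, ?_⟩
      have o2 : x ^ 2 ≠ 1 := fun h => by have := aux_ord hx 2 (by norm_num) h; omega
      have o3 : x ^ 3 ≠ 1 := fun h => by have := aux_ord hx 3 (by norm_num) h; omega
      have e : d = c ∨ d = c * x := by
        rcases h0 with h | h | h | h
        · simp [hc] at h
        · simp [hd] at h
        · exact Or.inl h.2
        · exact Or.inr h.2
      rintro (h | h | h | h)
      · simp [hc, hx0] at h
      · simp [hd, hx0] at h
      · have := h.2
        simp only [pow_one] at this
        rcases e with e | e <;> rw [e] at this <;> field_simp at this
        · exact o2 this.symm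
        · exact hx1 this.symm
      · have := h.2
        simp only [pow_one] at this
        rcases e with e | e <;> rw [e] at this <;> field_simp at this
        · exact o3 this.symm
        · exact o2 this.symm
    · exact ⟨_, Reach.rfl', h0⟩

/-- Case `a ≠ 0`, `b = 0`. -/
theorem case10 (hp5 : 5 ≤ p) (hx : Gen x) (hx1 : x ≠ 1) (ha : a ≠ 0)
    (hc0 : x * (a + c0) = c0) (v : ZMod p × ZMod p)
    (hv : v ≠ (c0, 0)) : Good x a 0 v := by
  have hx0 := aux_x0 hp5 hx
  have hc00 : c0 ≠ 0 := by rintro rfl; simp [hx0, ha] at hc0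
  obtain ⟨c, d⟩ := v
  by_cases hc : c = c0
  · subst hc
    have hd : d ≠ 0 := by rintro rfl; exact hv rfl
    apply good_v (d0 := 0) hp5 hx hx1 hc00
    intro z hz
    obtain ⟨k, hk⟩ := aux_inv hx (z / d) (div_ne_zero hz hd)
    have := aux_run' (b := 0) (d0 := 0) hx0 hc0 (by simp) c d k (by simp [hc00])
    rw [hk] at this
    simpa [hd] using this
  -- reaching the column `c = 0`
  have r0 : ∀ c d, c ≠ c0 → ∃ d', Reach (piInvPiab x a 0) (c, d) (0, d') := by
    intro c d hc
    have hc' := sub_ne_zero.2 hc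
    obtain ⟨k, hk, hk1, hk2⟩ := aux_least hx (-c0 / (c - c0)) (div_ne_zero (neg_ne_zero.2 hc00) hc')
    have := aux_run' (b := 0) (d0 := 0) hx0 hc0 (by simp) c d k (by
      intro i hi
      refine ⟨Or.inr fun h => hk1 i hi ?_, Or.inl rfl⟩
      field_simp; linear_combination h)
    rw [hk] at this
    have e : c0 + -c0 / (c - c0) * (c - c0) = 0 := by field_simp; ring
    rw [e] at this
    exact ⟨_, this⟩
  have r1 : ∀ d, Reach (piInvPiab x a 0) (0, d) (0, a + d) := by
    intro d
    have s := Reach.step (f := piInvPiab x a 0) (v := (0, d))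
    rw [aux_c d (Or.inl rfl)] at s
    obtain ⟨k, hk, hk1, hk2⟩ := aux_least hx x⁻¹ (inv_ne_zero hx0)
    have := aux_run' (b := 0) (d0 := 0) hx0 hc0 (by simp) (x * a) (x⁻¹ * (a + 0 + d)) k (by
      intro i hi
      refine ⟨Or.inr fun h => hk1 i hi ?_, Or.inl rfl⟩
      have h2 : c0 * (1 - x ^ i * x) = 0 := by linear_combination h - x ^ i * hc0
      have h3 : 1 - x ^ i * x = 0 := by simpa [hc00] using h2
      field_simp; linear_combination -h3)
    rw [inv_pow, hk, inv_inv] at this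
    refine s.trans ?_
    convert this using 2
    · field_simp; linear_combination -hc0
    · field_simp; ring
  have r2 : ∀ (n : ℕ) d, Reach (piInvPiab x a 0) (0, d) (0, n * a + d) := by
    intro n
    induction n with
    | zero => intro d; simpa using Reach.rfl'
    | succ n ih =>
      intro d
      refine (ih d).trans ?_
      convert r1 _ using 2
      push_cast; ring
  have r3 : ∀ d z, Reach (piInvPiab x a 0) (0, d) (0, z) := by
    intro d z
    have := r2 ((z - d) / a).val d
    rw [ZMod.natCast_zmod_val] at this
    convert this using 2
    field_simp; ring
  obtain ⟨d', h⟩ := r0 c d hc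
  refine Good.of_reach h ⟨⟨_, r3 d' 1, Or.inl rfl⟩, ⟨_, r3 d' 0, ?_⟩⟩
  simp [I2]

/-- Case `a = 0`, `b ≠ 0`. -/
theorem case01 (hp5 : 5 ≤ p) (hx : Gen x) (hx1 : x ≠ 1) (hb : b ≠ 0)
    (hd0 : b + d0 = x * d0) (v : ZMod p × ZMod p)
    (hv : v ≠ (0, d0)) : Good x 0 b v := by
  have hx0 := aux_x0 hp5 hx
  have hd00 : d0 ≠ 0 := by rintro rfl; simp [hb] at hd0
  obtain ⟨c, d⟩ := v
  by_cases hd : d = d0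
  · subst hd
    have hc : c ≠ 0 := by rintro rfl; exact hv rfl
    apply good_h (c0 := 0) hp5 hx hx1 hd00
    intro z hz
    obtain ⟨k, hk⟩ := hx (z / c) (div_ne_zero hz hc)
    have := aux_run' (a := 0) (c0 := 0) hx0 (by simp) hd0 c d k (by simp [hd0, hx0, hd00])
    rw [hk] at this
    simpa [hc] using this
  have r0 : ∀ c d, d ≠ d0 → ∃ c', Reach (piInvPiab x 0 b) (c, d) (c', -b) := by
    intro c d hd
    have hd' := sub_ne_zero.2 hd
    obtain ⟨k, hk, hk1, hk2⟩ := aux_least (aux_inv hx) (-(x * d0) / (d - d0))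
      (div_ne_zero (neg_ne_zero.2 (mul_ne_zero hx0 hd00)) hd')
    have := aux_run' (a := 0) (c0 := 0) hx0 (by simp) hd0 c d k (by
      intro i hi
      refine ⟨Or.inl rfl, Or.inr fun h => hk1 i hi ?_⟩
      rw [eq_div_iff hd']; linear_combination h - hd0)
    rw [hk] at this
    have e : d0 + -(x * d0) / (d - d0) * (d - d0) = -b := by
      rw [div_mul_cancel₀ _ hd']; linear_combination hd0
    rw [e] at this
    exact ⟨_, this⟩
  have r1 : ∀ c, Reach (piInvPiab x 0 b) (c, -b) (x * b + c, -b) := by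
    intro c
    have s := Reach.step (f := piInvPiab x 0 b) (v := (c, -b))
    rw [aux_d c (-b) (Or.inl rfl) (by simp)] at s
    obtain ⟨k, hk, hk1, hk2⟩ := aux_least (aux_inv hx) x hx0
    have := aux_run' (a := 0) (c0 := 0) hx0 (by simp) hd0 (x * (0 + c + x * b)) 0 k (by
      intro i hi
      refine ⟨Or.inl rfl, Or.inr fun h => hk1 i hi ?_⟩
      have h2 : d0 * (x - x⁻¹ ^ i) = 0 := by linear_combination h - hd0
      have h3 : x - x⁻¹ ^ i = 0 := by simpa [hd00] using h2
      linear_combination -h3)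
    have hk' : x ^ k = x⁻¹ := by
      have h5 := congrArg (·⁻¹) hk
      simpa using h5
    rw [hk, hk'] at this
    refine s.trans ?_
    convert this using 2
    · field_simp; ring
    · linear_combination -hd0
  have r2 : ∀ (n : ℕ) c, Reach (piInvPiab x 0 b) (c, -b) (n * (x * b) + c, -b) := by
    intro n
    induction n with
    | zero => intro d; simpa using Reach.rfl'
    | succ n ih =>
      intro d
      refine (ih d).trans ?_
      convert r1 _ using 2
      push_cast; ring
  have r3 : ∀ c z, Reach (piInvPiab x 0 b) (c, -b) (z, -b) := by
    intro c z
    have := r2 ((z - c) / (x * b)).val c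
    rw [ZMod.natCast_zmod_val] at this
    convert this using 2
    field_simp; ring
  obtain ⟨c', h⟩ := r0 c d hd
  refine Good.of_reach h ?_
  exact good_h (c0 := 0) hp5 hx hx1 (neg_ne_zero.2 hb) _ (fun z _ => r3 c' z)

/-- Case `a ≠ 0`, `b ≠ 0`. -/
theorem case11 (hp5 : 5 ≤ p) (hx : Gen x) (hx1 : x ≠ 1) (ha : a ≠ 0) (hb : b ≠ 0)
    (hc0 : x * (a + c0) = c0) (hd0 : b + d0 = x * d0) (v : ZMod p × ZMod p)
    (hv : v ≠ (c0, d0)) : Good x a b v := by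
  have hx0 := aux_x0 hp5 hx
  have hc00 : c0 ≠ 0 := by rintro rfl; simp [hx0, ha] at hc0
  have hd00 : d0 ≠ 0 := by rintro rfl; simp [hb] at hd0
  -- horizontal axis
  have gh : Good x a b (x * a, d0) := by
    apply good_h (c0 := c0) hp5 hx hx1 hd00
    intro z hz
    obtain ⟨k, hk, hk1, hk2⟩ := aux_least hx ((c0 - z) / (x * c0))
      (div_ne_zero (sub_ne_zero.2 hz.symm) (mul_ne_zero hx0 hc00))
    have := aux_run' hx0 hc0 hd0 (x * a) d0 k (by
      intro i hi
      refine ⟨Or.inr fun h => hk2 (i + 1) (by omega) (by omega) ?_, Or.inr ?_⟩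
      · have h2 : c0 * (1 - x ^ (i + 1)) = 0 := by linear_combination h - x ^ i * hc0
        have h3 : 1 - x ^ (i + 1) = 0 := by simpa [hc00] using h2
        linear_combination -h3
      · simp [hd0, hx0, hd00])
    rw [hk] at this
    convert this using 2
    · have e : x * a - c0 = - (x * c0) := by linear_combination hc0
      rw [e]; field_simp; ring
    · simp
  -- vertical axis
  have gv : Good x a b (c0, 0) := by
    apply good_v (d0 := d0) hp5 hx hx1 hc00
    intro z hz
    obtain ⟨k, hk, hk1, hk2⟩ := aux_least (aux_inv hx) ((d0 - z) / d0)
      (div_ne_zero (sub_ne_zero.2 hz.symm) hd00)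
    have := aux_run' hx0 hc0 hd0 c0 0 k (by
      intro i hi
      refine ⟨Or.inr (by simp [hc00]), Or.inr fun h => hk2 (i + 1) (by omega) (by omega) ?_⟩
      have h2 : d0 * (x - x⁻¹ ^ i) = 0 := by linear_combination h - hd0
      have h3 : x⁻¹ ^ i = x := by
        have : x - x⁻¹ ^ i = 0 := by simpa [hd00] using h2
        linear_combination -this
      rw [pow_succ, h3]; field_simp)
    rw [hk] at this
    convert this using 2
    · simp
    · field_simp; ring
  -- from just after `Q_κ` to `P_κ`
  have rQP : ∀ κ, κ ≠ 0 →
      Reach (piInvPiab x a b) (c0 - κ * c0, 0) (0, d0 - κ * d0) := by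
    intro κ hκ
    obtain ⟨k, hk, hk1, hk2⟩ := aux_least hx κ⁻¹ (inv_ne_zero hκ)
    have := aux_run' hx0 hc0 hd0 (c0 - κ * c0) 0 k (by
      intro i hi
      refine ⟨Or.inr fun h => hk1 i hi ?_, Or.inr fun h => hk2 (i + 1) (by omega) (by omega) ?_⟩
      · have h2 : c0 * (1 - x ^ i * κ) = 0 := by linear_combination h
        have h3 : 1 - x ^ i * κ = 0 := by simpa [hc00] using h2
        field_simp; linear_combination -h3
      · have h2 : d0 * (x - x⁻¹ ^ i) = 0 := by linear_combination h - hd0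
        have h3 : x⁻¹ ^ i = x := by
          have : x - x⁻¹ ^ i = 0 := by simpa [hd00] using h2
          linear_combination -this
        have h4 : x⁻¹ ^ (i + 1) = 1 := by rw [pow_succ, h3]; field_simp
        rwa [inv_pow, inv_eq_one] at h4)
    rw [inv_pow, hk, inv_inv] at this
    convert this using 2
    · field_simp; ring
    · ring
  obtain ⟨s, hs⟩ : ∃ s, d0 * s = -a := ⟨-a / d0, by field_simp⟩
  obtain ⟨u, hu⟩ : ∃ u, c0 * u = x ^ 2 * b := ⟨x ^ 2 * b / c0, by field_simp⟩
  -- from `P_κ` to just after `Q_{κ+s-u}`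
  have rPQ : ∀ κ, κ + s ≠ 0 →
      Reach (piInvPiab x a b) (0, d0 - κ * d0) (c0 - (κ + s - u) * c0, 0) := by
    intro κ hκ
    obtain ⟨k, hk, hk1, hk2⟩ := aux_least hx ((κ + s) * x⁻¹) (mul_ne_zero hκ (inv_ne_zero hx0))
    have st := Reach.step (f := piInvPiab x a b) (v := (0, d0 - κ * d0))
    rcases k with _ | k
    · have hκx : κ + s = x := by
        rw [pow_zero] at hk; field_simp at hk; exact hk.symm
      rw [aux_cd _ (by linear_combination hd0 + hs - d0 * hκx)] at st
      convert st using 2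
      linear_combination -c0 * hκx - hc0 + hu
    · rw [aux_c _ (Or.inr (by
        intro h
        apply hk1 0 (by omega)
        have h2 : d0 * (x - (κ + s)) = 0 := by linear_combination h - hd0 - hs
        have h3 : x - (κ + s) = 0 := by simpa [hd00] using h2
        rw [pow_zero]; field_simp; linear_combination h3))] at st
      refine st.trans ?_
      have e1 : x * a - c0 = - (x * c0) := by linear_combination hc0
      have e2 : x⁻¹ * (a + b + (d0 - κ * d0)) - d0 = - (x⁻¹ * ((κ + s) * d0)) := by
        field_simp; linear_combination hd0 + hs
      have := aux_run' hx0 hc0 hd0 (x * a) (x⁻¹ * (a + b + (d0 - κ * d0))) k (by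
        intro i hi
        rw [e1, e2]
        refine ⟨Or.inr fun h => hk2 (i + 1) (by omega) (by omega) ?_,
          Or.inr fun h => hk1 (i + 1) (by omega) ?_⟩
        · have h2 : c0 * (1 - x ^ (i + 1)) = 0 := by linear_combination h
          have h3 : 1 - x ^ (i + 1) = 0 := by simpa [hc00] using h2
          linear_combination -h3
        · have h2 : d0 * (x - x⁻¹ ^ (i + 1) * (κ + s)) = 0 := by linear_combination h - hd0
          have h3 : x - x⁻¹ ^ (i + 1) * (κ + s) = 0 := by simpa [hd00] using h2
          rw [inv_pow] at h3
          field_simp at h3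
          field_simp
          linear_combination h3)
      rw [e1, e2] at this
      have hk' : x ^ k * x = (κ + s) * x⁻¹ := by rw [← hk, pow_succ]
      have f1 : c0 + x ^ k * -(x * c0) = c0 - (κ + s) * x⁻¹ * c0 := by
        linear_combination -c0 * hk'
      have f2 : d0 + x⁻¹ ^ k * -(x⁻¹ * ((κ + s) * d0)) = -b := by
        have : x⁻¹ ^ k * x⁻¹ = x * (κ + s)⁻¹ := by
          rw [← pow_succ, inv_pow, hk]; field_simp
        have h5 : x⁻¹ ^ k * x⁻¹ * (κ + s) = x := by rw [this]; field_simp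
        linear_combination -d0 * h5 + hd0
      rw [f1, f2] at this
      refine this.trans ?_
      have st2 := Reach.step (f := piInvPiab x a b) (v := (c0 - (κ + s) * x⁻¹ * c0, -b))
      rw [aux_d _ _ (Or.inr (by
        intro h
        apply hk2 (k + 1) (by omega) le_rfl
        have h2 : c0 * (1 - (κ + s) * x⁻¹) = 0 := by linear_combination h
        have h3 : 1 - (κ + s) * x⁻¹ = 0 := by simpa [hc00] using h2
        rw [hk]; linear_combination -h3)) (by simp)] at st2
      convert st2 using 2
      have h6 : x * x⁻¹ = 1 := by field_simp
      linear_combination -hc0 + hu + (κ + s) * c0 * h6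
  have hsu : s - u ≠ 0 := by
    intro h
    have hsu : s = u := by linear_combination h
    have h1 : c0 * a + x ^ 2 * b * d0 = 0 := by
      linear_combination c0 * hs - d0 * hu - c0 * d0 * h
    have h2 : (x - 1) * (x ^ 3 * d0 ^ 2 - c0 ^ 2) = 0 := by
      linear_combination x * h1 - c0 * hc0 - x ^ 3 * d0 * hd0
    have h3 : x ^ 3 * d0 ^ 2 - c0 ^ 2 = 0 := by
      rcases mul_eq_zero.1 h2 with h | h
      · exact absurd (by linear_combination h) hx1
      · exact h
    apply aux_nsq hp5 hx (c0 / (x * d0))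
    field_simp
    linear_combination h3
  have gP0 : ∀ κ, κ = -s → Good x a b (0, d0 - κ * d0) := by
    intro κ h'
    have st := Reach.step (f := piInvPiab x a b) (v := (0, d0 - κ * d0))
    have e : a + b + (d0 - κ * d0) = x * d0 := by
      rw [h']; linear_combination hd0 + hs
    rw [aux_c _ (Or.inr (by rw [e]; exact mul_ne_zero hx0 hd00)), e] at st
    refine Good.of_reach st ?_
    rwa [inv_mul_cancel_left₀ hx0]
  have gP1 : ∀ (n : ℕ) κ, κ + n * (s - u) = -s → Good x a b (0, d0 - κ * d0) := by
    intro n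
    induction n with
    | zero => intro κ h; exact gP0 κ (by simpa using h)
    | succ n ih =>
      intro κ h
      by_cases h1 : κ + s = 0
      · exact gP0 κ (by linear_combination h1)
      by_cases h2 : κ + s - u = 0
      · have := rPQ κ h1
        rw [h2] at this
        exact Good.of_reach this (by simpa using gv)
      · refine Good.of_reach ((rPQ κ h1).trans (rQP _ h2)) (ih _ ?_)
        push_cast at h
        linear_combination h
  have gP : ∀ d, Good x a b (0, d) := by
    intro d
    have := gP1 ((-s - (1 - d / d0)) / (s - u)).val (1 - d / d0) (by
      rw [ZMod.natCast_zmod_val]; field_simp; ring)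
    convert this using 2
    field_simp; ring
  have gQ : ∀ c, Good x a b (c, 0) := by
    intro c
    by_cases h : c = c0
    · rw [h]; exact gv
    · have := rQP (1 - c / c0) (by
        intro h2; apply h; field_simp at h2; linear_combination -h2)
      refine Good.of_reach (w := (0, d0 - (1 - c / c0) * d0)) ?_ (gP _)
      convert this using 2
      field_simp; ring
  obtain ⟨c, d⟩ := v
  have ex : ∃ j : ℕ, c0 + x ^ j * (c - c0) = 0 ∨ b + (d0 + x⁻¹ ^ j * (d - d0)) = 0 := by
    by_cases hc : c = c0
    · have hd : d - d0 ≠ 0 := by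
        intro h; apply hv; rw [hc, sub_eq_zero.1 h]
      obtain ⟨k, hk⟩ := aux_inv hx (-(x * d0) / (d - d0))
        (div_ne_zero (neg_ne_zero.2 (mul_ne_zero hx0 hd00)) hd)
      refine ⟨k, Or.inr ?_⟩
      rw [hk, div_mul_cancel₀ _ hd]; linear_combination hd0
    · have hc' := sub_ne_zero.2 hc
      obtain ⟨k, hk⟩ := hx (-c0 / (c - c0)) (div_ne_zero (neg_ne_zero.2 hc00) hc')
      refine ⟨k, Or.inl ?_⟩
      rw [hk, div_mul_cancel₀ _ hc']; ring
  classical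
  have r := aux_run' hx0 hc0 hd0 c d (Nat.find ex) (by
    intro i hi
    have := Nat.find_min ex hi
    push Not at this
    exact ⟨Or.inr this.1, Or.inr this.2⟩)
  refine Good.of_reach r ?_
  have sp := Nat.find_spec ex
  generalize c0 + x ^ (Nat.find ex) * (c - c0) = c1 at *
  generalize d0 + x⁻¹ ^ (Nat.find ex) * (d - d0) = d1 at *
  by_cases hc1 : c1 = 0
  · rw [hc1]; exact gP _
  · have h2 := sp.resolve_left hc1
    have st := Reach.step (f := piInvPiab x a b) (v := (c1, d1))
    rw [aux_d _ _ (Or.inr hc1) h2] at st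
    exact Good.of_reach st (gQ _)

end

theorem aux_fix {α : Type*} {f : α → α} {u : α} (h : f u = u) : ¬ 2 ≤ (orbit f u).ncard := by
  have : orbit f u = {u} := by
    ext w
    simp only [orbit, Set.mem_setOf_eq, Set.mem_singleton_iff]
    constructor
    · rintro ⟨k, rfl⟩; exact Function.iterate_fixed h k
    · rintro rfl; exact ⟨0, rfl⟩
  rw [this]; simp

/-- For `p ≥ 5` and every `(a,b)`, every orbit of size at least 2 of the permutation
`π⁻¹ ∘ π_{(a,b)}` contains at least one element of `𝓘⁽²⁾` and at least one element
of its complement `𝓘⁽¹⁾`. -/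
theorem stmt17 (p : ℕ) (hp : p.Prime) (hodd : Odd p) (hp5 : 5 ≤ p) (x : ZMod p)
    (hx : ∀ z : ZMod p, z ≠ 0 → ∃ k : ℕ, x ^ k = z) :
    ∀ (a b : ZMod p) (u : ZMod p × ZMod p),
      2 ≤ (orbit (piInvPiab x a b) u).ncard →
        (∃ q ∈ orbit (piInvPiab x a b) u, q ∈ I2 p x) ∧
        (∃ q ∈ orbit (piInvPiab x a b) u, q ∉ I2 p x) := by
  have : Fact p.Prime := ⟨hp⟩
  intro a b u hu
  have hx0 := aux_x0 hp5 hx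
  have hx1 : x ≠ 1 := by
    rintro rfl
    have := aux_ord hx 1 one_pos (by simp)
    omega
  have hx1' : 1 - x ≠ 0 := sub_ne_zero.2 hx1.symm
  have hx1'' : x - 1 ≠ 0 := sub_ne_zero.2 hx1
  obtain ⟨c0, hc0⟩ : ∃ c0, x * (a + c0) = c0 := ⟨x * a / (1 - x), by field_simp; ring⟩
  obtain ⟨d0, hd0⟩ : ∃ d0, b + d0 = x * d0 := ⟨b / (x - 1), by field_simp; ring⟩
  have hne : u ≠ (c0, d0) := by
    rintro rfl
    refine aux_fix ?_ hu
    rw [aux_gen, hc0, hd0, inv_mul_cancel_left₀ hx0]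
    · by_contra! h
      rw [h.2] at hc0
      simp [hx0, h.1] at hc0
    · by_contra! h
      rw [h.2] at hd0
      have : d0 = 0 := by simpa [hx0] using hd0.symm
      rw [this] at h
      simp [h.1] at h
  have key : Good x a b u := by
    by_cases ha : a = 0
    · subst ha
      have hc : c0 = 0 := by
        have : (1 - x) * c0 = 0 := by linear_combination -hc0
        simpa [hx1'] using this
      by_cases hb : b = 0
      · subst hb
        have hd : d0 = 0 := by
          have : (x - 1) * d0 = 0 := by linear_combination -hd0
          simpa [hx1''] using this
        rw [hc, hd] at hne
        exact case00 hp5 hx hx1 u hne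
      · rw [hc] at hne
        exact case01 hp5 hx hx1 hb hd0 u hne
    · by_cases hb : b = 0
      · subst hb
        have hd : d0 = 0 := by
          have : (x - 1) * d0 = 0 := by linear_combination -hd0
          simpa [hx1''] using this
        rw [hd] at hne
        exact case10 hp5 hx hx1 ha hc0 u hne
      · exact case11 hp5 hx hx1 ha hb hc0 hd0 u hne
  exact key
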